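/- Let s = (1+√5)/2 be the golden ratio (so s² = s + 1), let f = f_s be the tent map with slope s, let c = 1/2 (so that c, f(c) = s/2, f²(c) = s(1 − s/2) form a period-3 orbit of f), and let d = 1/(s + s²). Then the interval [d, f(c)] is f-invariant and the restriction f|_{[d, f(c)]} has limit shadowing but does not have shadowing. -/

import Mathlib

/-!
Write `s` for the golden ratio, so `s² = s + 1`; then `d = 2s - 3`, the image of `[d, s/2]` is the
core `[a, s/2]` with `a = (s - 1)/2`, and `p = s - 1` is the fixed point on the decreasing branch.

*Limit shadowing.* The intervals `I₀ = [a, 1/2]` and `I₁ = [1/2, s/2]` form a Markov partition of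
the core with `f(I₀) = I₁` and `f(I₁) = I₀ ∪ I₁`, so every 0-1 sequence without two consecutive
zeros is the itinerary of some point (`exists_itinerary`). For an asymptotic pseudo-orbit `x`,
put `e n = 0` when `x n < 1/2 ≤ x (n - 1)`, and `e n = 1` otherwise. This sequence is admissible.
It disagrees with the position of `x n` only if `x (n - 1)` and `x n` are both below `1/2`; since
`x (n - 1)` is asymptotically at least `a` and `f(a) = 1/2`, `x n` is then asymptotically close to
`1/2`, where both branches agree. Hence `x` is also an asymptotic pseudo-orbit for the sequence of
affine branches chosen by `e`. These expand by `s`, so a point with itinerary `e`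
asymptotically shadows `x` (`tendsto_zero_of_expanding`).

*No shadowing.* The left endpoint satisfies `f²(d) = p`, and points of the interval near `d` are
mapped by `f²` to points `≥ p`. The pseudo-orbit `d, f(d), p - η, f(p - η), …` moves to the other
side of `p`, and two points on different sides of `p` separate at rate `s`
(`not_close_of_opposite_sides`).
-/

/-- `x` is a `δ`-pseudo-orbit for `f` contained in `A`, and `z ∈ A` `ε`-shadows it. -/
def ShadowingOn {X : Type*} [MetricSpace X] (f : X → X) (A : Set X) : Prop :=
  ∀ ε : ℝ, 0 < ε → ∃ δ : ℝ, 0 < δ ∧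
    ∀ x : ℕ → X, (∀ n, x n ∈ A) → (∀ n, dist (f (x n)) (x (n + 1)) < δ) →
      ∃ z ∈ A, ∀ n, dist (f^[n] z) (x n) < ε

def LimitShadowingOn {X : Type*} [MetricSpace X] (f : X → X) (A : Set X) : Prop :=
  ∀ x : ℕ → X, (∀ n, x n ∈ A) →
    Filter.Tendsto (fun n => dist (f (x n)) (x (n + 1))) Filter.atTop (nhds 0) →
    ∃ z ∈ A, Filter.Tendsto (fun n => dist (f^[n] z) (x n)) Filter.atTop (nhds 0)

def SLimitShadowingOn {X : Type*} [MetricSpace X] (f : X → X) (A : Set X) : Prop :=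
  ∀ ε : ℝ, 0 < ε → ∃ δ : ℝ, 0 < δ ∧
    (∀ x : ℕ → X, (∀ n, x n ∈ A) → (∀ n, dist (f (x n)) (x (n + 1)) < δ) →
      ∃ z ∈ A, ∀ n, dist (f^[n] z) (x n) < ε) ∧
    (∀ x : ℕ → X, (∀ n, x n ∈ A) → (∀ n, dist (f (x n)) (x (n + 1)) < δ) →
      Filter.Tendsto (fun n => dist (f (x n)) (x (n + 1))) Filter.atTop (nhds 0) →
      ∃ z ∈ A, (∀ n, dist (f^[n] z) (x n) < ε) ∧
        Filter.Tendsto (fun n => dist (f^[n] z) (x n)) Filter.atTop (nhds 0))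
/-- The tent map with slope `s`. -/
noncomputable def tentMap (s : ℝ) : ℝ → ℝ := fun x => if x ≤ 1 / 2 then s * x else s * (1 - x)

/-! ### The invariant interval -/

lemma golden_d_eq {s : ℝ} (h1 : 1.6 < s) (h : s ^ 2 = s + 1) : 1 / (s + s ^ 2) = 2 * s - 3 := by
  have : s + s ^ 2 ≠ 0 := by positivity
  rw [div_eq_iff this]
  nlinarith

lemma tentMap_left (s : ℝ) {x : ℝ} (hx : x ≤ 1 / 2) : tentMap s x = s * x := by
  simp only [tentMap, if_pos hx]

lemma tentMap_right (s : ℝ) {x : ℝ} (hx : 1 / 2 ≤ x) : tentMap s x = s * (1 - x) := by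
  rcases hx.eq_or_lt with rfl | hx
  · rw [tentMap_left s le_rfl]; ring
  · simp only [tentMap, if_neg (not_le.mpr hx)]

lemma tentMap_mem_core {s : ℝ} (h1 : 1.6 < s) (h2 : s < 1.62) (h : s ^ 2 = s + 1) {x : ℝ}
    (hx : x ∈ Set.Icc (2 * s - 3) (s / 2)) :
    tentMap s x ∈ Set.Icc ((s - 1) / 2) (s / 2) := by
  obtain ⟨hl, hr⟩ := hx
  rcases le_total x (1 / 2) with hc | hc
  · rw [tentMap_left s hc]
    constructor <;> nlinarith
  · rw [tentMap_right s hc]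
    constructor <;> nlinarith

lemma tentMap_mem {s : ℝ} (h1 : 1.6 < s) (h2 : s < 1.62) (h : s ^ 2 = s + 1) {x : ℝ}
    (hx : x ∈ Set.Icc (2 * s - 3) (s / 2)) :
    tentMap s x ∈ Set.Icc (2 * s - 3) (s / 2) := by
  obtain ⟨hl, hr⟩ := tentMap_mem_core h1 h2 h hx
  exact ⟨by linarith, hr⟩

lemma continuous_tentMap (s : ℝ) : Continuous (tentMap s) := by
  unfold tentMap
  refine Continuous.if_le (by fun_prop) (by fun_prop) (by fun_prop) (by fun_prop) ?_
  rintro x rfl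
  ring

/-! ### Itineraries and limit shadowing -/

/-- The Markov partition of the core: `[(s - 1)/2, 1/2]` for the symbol `false`,
`[1/2, s/2]` for the symbol `true`. -/
def markovCell (s : ℝ) (e : Bool) : Set ℝ :=
  if e then Set.Icc (1 / 2) (s / 2) else Set.Icc ((s - 1) / 2) (1 / 2)

lemma isCompact_markovCell (s : ℝ) (e : Bool) : IsCompact (markovCell s e) := by
  cases e <;> simp only [markovCell] <;> exact isCompact_Icc

lemma markovCell_subset {s : ℝ} (h1 : 1.6 < s) (h2 : s < 1.62) (e : Bool) :
    markovCell s e ⊆ Set.Icc ((s - 1) / 2) (s / 2) := by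
  intro x hx
  cases e <;> simp [markovCell] at hx <;> constructor <;> linarith

/-- The affine branch of the tent map belonging to a symbol. -/
def tentBranch (s : ℝ) (e : Bool) (x : ℝ) : ℝ := if e then s * (1 - x) else s * x

lemma tentMap_eq_branch {s : ℝ} {e : Bool} {x : ℝ} (hx : x ∈ markovCell s e) :
    tentMap s x = tentBranch s e x := by
  cases e
  · simp only [markovCell, Bool.false_eq_true, if_false] at hx
    simp only [tentBranch, Bool.false_eq_true, if_false]
    exact tentMap_left s hx.2
  · simp only [markovCell, if_true] at hx
    simp only [tentBranch, if_true]
    exact tentMap_right s hx.1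

lemma abs_tentBranch_sub {s : ℝ} (hs : 0 < s) (e : Bool) (x y : ℝ) :
    |tentBranch s e x - tentBranch s e y| = s * |x - y| := by
  cases e
  · simp only [tentBranch, Bool.false_eq_true, if_false]
    rw [← mul_sub, abs_mul, abs_of_pos hs]
  · simp only [tentBranch, if_true]
    rw [← mul_sub, abs_mul, abs_of_pos hs, abs_sub_comm x y]
    congr 2; ring

/-- Pulling back along the inverse branches realizes every finite admissible word. -/
lemma exists_finite_itinerary {s : ℝ} (h1 : 1.6 < s) (h2 : s < 1.62) (h : s ^ 2 = s + 1)
    (N : ℕ) (e : ℕ → Bool) (he : ∀ n, e n = false → e (n + 1) = true) :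
    ∃ w, ∀ n ≤ N, (tentMap s)^[n] w ∈ markovCell s (e n) := by
  induction N generalizing e with
  | zero =>
    refine ⟨1 / 2, fun n hn => ?_⟩
    obtain rfl : n = 0 := by omega
    simp only [Function.iterate_zero, id, markovCell]
    split <;> constructor <;> linarith
  | succ N ih =>
    obtain ⟨w, hw⟩ := ih (fun n => e (n + 1)) (fun n => he (n + 1))
    have hs : 0 < s := by linarith
    have h0 : w ∈ markovCell s (e 1) := hw 0 (Nat.zero_le _)
    obtain ⟨v, hv, hvw⟩ : ∃ v ∈ markovCell s (e 0), tentMap s v = w := by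
      have hq : s * (w / s) = w := by field_simp
      cases h00 : e 0
      · rw [he 0 h00] at h0
        simp only [markovCell, if_true] at h0
        have hm : w / s ∈ markovCell s false := by
          simp only [markovCell, Bool.false_eq_true, if_false]
          obtain ⟨ha, hb⟩ := h0
          constructor <;> nlinarith
        refine ⟨w / s, hm, ?_⟩
        rw [tentMap_eq_branch hm]
        simpa [tentBranch] using hq
      · obtain ⟨ha, hb⟩ := markovCell_subset h1 h2 _ h0
        have hm : 1 - w / s ∈ markovCell s true := by
          simp only [markovCell, if_true]
          constructor <;> nlinarith
        refine ⟨1 - w / s, hm, ?_⟩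
        rw [tentMap_eq_branch hm]
        simpa [tentBranch] using hq
    refine ⟨v, fun n hn => ?_⟩
    cases n with
    | zero => exact hv
    | succ n =>
      rw [Function.iterate_succ_apply, hvw]
      exact hw n (by omega)

/-- Every 0-1 sequence without two consecutive zeros is an itinerary. -/
lemma exists_itinerary {s : ℝ} (h1 : 1.6 < s) (h2 : s < 1.62) (h : s ^ 2 = s + 1)
    (e : ℕ → Bool) (he : ∀ n, e n = false → e (n + 1) = true) :
    ∃ w, ∀ n, (tentMap s)^[n] w ∈ markovCell s (e n) := by
  let K : ℕ → Set ℝ := fun N => {w | ∀ n ≤ N, (tentMap s)^[n] w ∈ markovCell s (e n)}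
  have hclosed : ∀ N, IsClosed (K N) := by
    intro N
    simp only [K, Set.ofPred_forall]
    exact isClosed_iInter fun n => isClosed_iInter fun _ =>
      (isCompact_markovCell s _).isClosed.preimage ((continuous_tentMap s).iterate n)
  have hK0 : IsCompact (K 0) :=
    (isCompact_markovCell s (e 0)).of_isClosed_subset (hclosed 0) fun w hw => hw 0 le_rfl
  obtain ⟨w, hw⟩ := IsCompact.nonempty_iInter_of_sequence_nonempty_isCompact_isClosed K
    (fun N w hw n hn => hw n (by omega))
    (fun N => exists_finite_itinerary h1 h2 h N e he) hK0 hclosed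
  exact ⟨w, fun n => Set.mem_iInter.mp hw n n le_rfl⟩

/-- A bounded error sequence which is expanded by `s > 1` at each step, up to a perturbation tending
to zero, must itself tend to zero. -/
lemma tendsto_zero_of_expanding {s : ℝ} (hs : 1 < s) {D E : ℕ → ℝ} (hD0 : ∀ n, 0 ≤ D n)
    (hD1 : ∀ n, D n ≤ 1) (hE : Filter.Tendsto E Filter.atTop (nhds 0))
    (hDE : ∀ n, s * D n ≤ D (n + 1) + E n) : Filter.Tendsto D Filter.atTop (nhds 0) := by
  rw [Metric.tendsto_atTop]
  intro ε hε
  -- If `E ≤ η` from `N` on, the fixed point of `t ↦ (t + η)/s` is `η/(s - 1)`, here `ε/2`.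
  have hη : 0 < (s - 1) * (ε / 2) := mul_pos (by linarith) (by linarith)
  obtain ⟨N, hN⟩ := (hE.eventually (gt_mem_nhds hη)).exists_forall_of_atTop
  have key : ∀ k n, N ≤ n → D n ≤ (1 / s) ^ k + ε / 2 := by
    intro k
    induction k with
    | zero => intro n _; have := hD1 n; simp; linarith
    | succ k ih =>
      intro n hn
      have a1 := ih (n + 1) (by omega)
      have a2 := hDE n
      have a3 := hN n hn
      have a4 : s * (1 / s) ^ (k + 1) = (1 / s) ^ k := by
        rw [pow_succ]; field_simp
      nlinarith
  refine ⟨N, fun n hn => ?_⟩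
  have hlim : Filter.Tendsto (fun k : ℕ => (1 / s) ^ k + ε / 2) Filter.atTop (nhds (0 + ε / 2)) :=
    (tendsto_pow_atTop_nhds_zero_of_lt_one (by positivity)
      ((div_lt_one (by linarith)).mpr hs)).add_const _
  have := ge_of_tendsto' hlim fun k => key k n hn
  rw [Real.dist_eq, sub_zero, abs_of_nonneg (hD0 n)]
  linarith

lemma golden_limitShadowing {s : ℝ} (h1 : 1.6 < s) (h2 : s < 1.62) (h : s ^ 2 = s + 1) :
    LimitShadowingOn (tentMap s) (Set.Icc (2 * s - 3) (s / 2)) := by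
  intro x hx hlim
  have hs : 0 < s := by linarith
  set δ : ℕ → ℝ := fun n => dist (tentMap s (x n)) (x (n + 1)) with hδ
  -- The case `n = 0` gets the symbol `true`, since `0 - 1 = 0`.
  let e : ℕ → Bool := fun n => !decide (x n < 1 / 2 ∧ 1 / 2 ≤ x (n - 1))
  have he : ∀ n, e n = false → e (n + 1) = true := by
    intro n hn
    simp [e] at hn ⊢
    exact Or.inr hn.1
  obtain ⟨z, hz⟩ := exists_itinerary h1 h2 h e he
  have hzcore : ∀ n, (tentMap s)^[n] z ∈ Set.Icc ((s - 1) / 2) (s / 2) :=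
    fun n => markovCell_subset h1 h2 _ (hz n)
  refine ⟨z, ⟨by linarith [(hzcore 0).1, show (tentMap s)^[0] z = z from rfl], (hzcore 0).2⟩, ?_⟩
  have hstep : ∀ n, |tentBranch s (e (n + 2)) (x (n + 2)) - x (n + 3)| ≤
      δ (n + 2) + 2 * s * (s * δ n + δ (n + 1)) := by
    intro n
    have hd0 : 0 ≤ δ n := dist_nonneg
    have hd1 : 0 ≤ δ (n + 1) := dist_nonneg
    have hbr : |tentBranch s (e (n + 2)) (x (n + 2)) - tentMap s (x (n + 2))| ≤
        2 * s * (s * δ n + δ (n + 1)) := by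
      have hpos : 0 ≤ 2 * s * (s * δ n + δ (n + 1)) := by positivity
      rcases le_or_gt (1 / 2) (x (n + 2)) with hc | hc
      · have : e (n + 2) = true := by
          simp only [e, Bool.not_eq_true', decide_eq_false_iff_not]
          intro hh; linarith [hh.1]
        rw [this, tentMap_right s hc]
        simpa [tentBranch] using hpos
      · rcases le_or_gt (1 / 2) (x (n + 1)) with hc' | hc'
        · have : e (n + 2) = false := by
            simp only [e, Bool.not_eq_false', decide_eq_true_eq]
            exact ⟨hc, hc'⟩
          rw [this, tentMap_left s hc.le]
          simpa [tentBranch] using hpos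
        · have : e (n + 2) = true := by
            simp only [e, Bool.not_eq_true', decide_eq_false_iff_not]
            intro hh
            have := hh.2
            simp only [show n + 2 - 1 = n + 1 from rfl] at this
            linarith
          rw [this, tentMap_left s hc.le]
          -- `x (n + 1) ≥ a - δ n` and `s * a = 1/2`, hence `x (n + 2) ≥ 1/2 - s * δ n - δ (n + 1)`.
          have b0 := (tentMap_mem_core h1 h2 h (hx n)).1
          have b1 : tentMap s (x n) - x (n + 1) ≤ δ n := le_abs_self _
          have b2 : tentMap s (x (n + 1)) - x (n + 2) ≤ δ (n + 1) := le_abs_self _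
          rw [tentMap_left s hc'.le] at b2
          have b3 : 1 / 2 - x (n + 2) ≤ s * δ n + δ (n + 1) := by nlinarith
          simp only [tentBranch, if_true]
          rw [abs_of_nonneg (by nlinarith)]
          nlinarith
    have htri := abs_sub_le (tentBranch s (e (n + 2)) (x (n + 2))) (tentMap s (x (n + 2)))
      (x (n + 3))
    have hδ2 : |tentMap s (x (n + 2)) - x (n + 3)| = δ (n + 2) := rfl
    linarith
  rw [← Filter.tendsto_add_atTop_iff_nat 2]
  refine tendsto_zero_of_expanding (s := s)
    (E := fun n => δ (n + 2) + 2 * s * (s * δ n + δ (n + 1))) (by linarith)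
    (fun n => dist_nonneg) ?_ ?_ ?_
  · intro n
    obtain ⟨ha, hb⟩ := hzcore (n + 2)
    obtain ⟨hc, hd⟩ := hx (n + 2)
    rw [Real.dist_eq, abs_le]
    constructor <;> linarith
  · have t2 := hlim.comp (Filter.tendsto_add_atTop_nat 2)
    have t1 := hlim.comp (Filter.tendsto_add_atTop_nat 1)
    have := t2.add (((hlim.const_mul s).add t1).const_mul (2 * s))
    simpa using this
  · intro n
    simp only [Real.dist_eq]
    rw [← abs_tentBranch_sub hs (e (n + 2)), ← tentMap_eq_branch (hz (n + 2)),
      ← Function.iterate_succ_apply' (tentMap s)]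
    have htri := abs_sub_le ((tentMap s)^[n + 3] z) (x (n + 3))
      (tentBranch s (e (n + 2)) (x (n + 2)))
    rw [abs_sub_comm (x (n + 3))] at htri
    have := hstep n
    exact htri.trans (by gcongr)

/-! ### Failure of shadowing -/

/-- Orbits starting on different sides of the fixed point `s - 1` cannot stay `1/20`-close: while
they do, both remain on the decreasing branch, so their distance is multiplied by `s`. -/
lemma not_close_of_opposite_sides {s : ℝ} (h1 : 1.6 < s) (h2 : s < 1.62) (h : s ^ 2 = s + 1)
    {u v : ℝ} (hu : s - 1 ≤ u) (hv : v < s - 1)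
    (hclose : ∀ n, |(tentMap s)^[n] u - (tentMap s)^[n] v| < 1 / 20) : False := by
  have hs : 0 < s := by linarith
  have key : ∀ n, ((tentMap s)^[n] u - (s - 1)) * ((tentMap s)^[n] v - (s - 1)) ≤ 0 ∧
      |(tentMap s)^[n] u - (tentMap s)^[n] v| = s ^ n * |u - v| := by
    intro n
    induction n with
    | zero => exact ⟨by simp only [Function.iterate_zero, id]; nlinarith, by simp⟩
    | succ n ih =>
      obtain ⟨i1, i2⟩ := ih
      have hc := hclose n
      rw [Function.iterate_succ_apply', Function.iterate_succ_apply', pow_succ']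
      set U := (tentMap s)^[n] u
      set V := (tentMap s)^[n] v
      rw [abs_lt] at hc
      have hU : 1 / 2 ≤ U := by
        by_contra! hlt
        nlinarith
      have hV : 1 / 2 ≤ V := by
        by_contra! hlt
        nlinarith
      rw [tentMap_right s hU, tentMap_right s hV]
      constructor
      · have e1 : s * (1 - U) - (s - 1) = -s * (U - (s - 1)) := by linear_combination -h
        have e2 : s * (1 - V) - (s - 1) = -s * (V - (s - 1)) := by linear_combination -h
        rw [e1, e2]
        nlinarith [mul_pos hs hs]
      · rw [mul_assoc, ← i2, ← mul_sub, abs_mul, abs_of_pos hs, abs_sub_comm U V]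
        congr 2; ring
  have huv : 0 < |u - v| := abs_pos.mpr (by linarith)
  obtain ⟨n, hn⟩ := pow_unbounded_of_one_lt (1 / |u - v|) (show 1 < s by linarith)
  rw [div_lt_iff₀ huv] at hn
  have := hclose n
  rw [(key n).2] at this
  linarith

lemma golden_not_shadowing {s : ℝ} (h1 : 1.6 < s) (h2 : s < 1.62) (h : s ^ 2 = s + 1) :
    ¬ ShadowingOn (tentMap s) (Set.Icc (2 * s - 3) (s / 2)) := by
  intro hsh
  obtain ⟨δ, hδ, H⟩ := hsh (1 / 20) (by norm_num)
  obtain ⟨η, hη0, hη⟩ : ∃ η, 0 < η ∧ η < min δ (1 / 20) := exists_between (by positivity)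
  have hηδ := hη.trans_le (min_le_left _ _)
  have hη1 := hη.trans_le (min_le_right _ _)
  let x : ℕ → ℝ := fun n => match n with
    | 0 => 2 * s - 3
    | 1 => 2 - s
    | n + 2 => (tentMap s)^[n] (s - 1 - η)
  have hf0 : tentMap s (2 * s - 3) = 2 - s := by
    rw [tentMap_left s (by linarith)]; linear_combination 2 * h
  have hf1 : tentMap s (2 - s) = s - 1 := by
    rw [tentMap_left s (by linarith)]; linear_combination -h
  have hxmem : ∀ n, x (n + 2) ∈ Set.Icc (2 * s - 3) (s / 2) := by
    intro n
    induction n with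
    | zero => constructor <;> simp only [x, Function.iterate_zero, id] <;> linarith
    | succ n ih =>
      have := tentMap_mem h1 h2 h ih
      simp only [x, ← Function.iterate_succ_apply'] at this
      exact this
  obtain ⟨z, hz, hzx⟩ := H x
    (by
      rintro (_ | _ | n)
      · constructor <;> simp only [x] <;> linarith
      · constructor <;> simp only [x] <;> linarith
      · exact hxmem n)
    (by
      rintro (_ | _ | n)
      · simp only [x, hf0, dist_self]; exact hδ
      · simp only [x, Function.iterate_zero, id, hf1, Real.dist_eq]
        rw [abs_of_pos (by linarith)]
        linarith
      · simp only [x, ← Function.iterate_succ_apply', dist_self]; exact hδ)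
  have hz0 : |z - (2 * s - 3)| < 1 / 20 := hzx 0
  have hzl := hz.1
  rw [abs_lt] at hz0
  have hz1 : tentMap s z = s * z := tentMap_left s (by linarith)
  have hz2 : tentMap s (tentMap s z) = s * (s * z) := by
    rw [hz1]; exact tentMap_left s (by nlinarith)
  refine not_close_of_opposite_sides h1 h2 h (u := tentMap s (tentMap s z)) (v := s - 1 - η)
    ?_ (by linarith) fun n => hzx (n + 2)
  rw [hz2]
  nlinarith

/-- For the tent map with slope the golden ratio `s = (1+√5)/2`, with
critical point `c = 1/2` and `d = 1/(s+s²)`, the interval `[d, f(c)] = [d, s/2]` is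
invariant and the restriction of the tent map to it has limit shadowing but not
shadowing. -/
theorem goldenTent_limit_shadowing_not_shadowing :
    Set.MapsTo (tentMap ((1 + Real.sqrt 5) / 2))
      (Set.Icc (1 / (((1 + Real.sqrt 5) / 2) + ((1 + Real.sqrt 5) / 2) ^ 2))
        (((1 + Real.sqrt 5) / 2) / 2))
      (Set.Icc (1 / (((1 + Real.sqrt 5) / 2) + ((1 + Real.sqrt 5) / 2) ^ 2))
        (((1 + Real.sqrt 5) / 2) / 2)) ∧
    LimitShadowingOn (tentMap ((1 + Real.sqrt 5) / 2))
      (Set.Icc (1 / (((1 + Real.sqrt 5) / 2) + ((1 + Real.sqrt 5) / 2) ^ 2))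
        (((1 + Real.sqrt 5) / 2) / 2)) ∧
    ¬ ShadowingOn (tentMap ((1 + Real.sqrt 5) / 2))
      (Set.Icc (1 / (((1 + Real.sqrt 5) / 2) + ((1 + Real.sqrt 5) / 2) ^ 2))
        (((1 + Real.sqrt 5) / 2) / 2)) := by
  have h5 : Real.sqrt 5 ^ 2 = 5 := Real.sq_sqrt (by norm_num)
  have h50 : 0 ≤ Real.sqrt 5 := Real.sqrt_nonneg 5
  have h1 : 1.6 < (1 + Real.sqrt 5) / 2 := by nlinarith
  have h2 : (1 + Real.sqrt 5) / 2 < 1.62 := by nlinarith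
  have h : ((1 + Real.sqrt 5) / 2) ^ 2 = (1 + Real.sqrt 5) / 2 + 1 := by linear_combination h5 / 4
  rw [golden_d_eq h1 h]
  exact ⟨fun x hx => tentMap_mem h1 h2 h hx, golden_limitShadowing h1 h2 h,
    golden_not_shadowing h1 h2 h⟩
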